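/- Let (w_r)_{r≥0} be a sequence of nonnegative real numbers and let κ > 0, B > 0. Assume that for all r ≥ 0, w_{r+1} ≤ w_r − κ·w_r² + B. Then for every integer r ≥ 0, w_r ≤ √(B/κ) + B + w_0/(1 + κ·r·w_0). -/

import Mathlib

/-!
Write `s = √(B / κ)` for the equilibrium of the recursion. From a value at most `s`, one step ends
below `s + B`. Above `s`, the excess `u = w r - s` satisfies
`u' ≤ u - κ * u ^ 2 ≤ u / (1 + κ * u)`: it decreases, and it is dominated by the time-one map of the
flow of `x' = -κ * x ^ 2`. This flow is monotone and sends `x` to `x / (1 + κ * t * x)` at time `t`,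
so the excess never exceeds the larger of `B` and the value of the flow started at `w 0`.
-/

section QuadraticDecay

variable {K : Type*} [Field K]

theorem div_one_add_mul_comp {c x : K} (d : K) (h : 1 + c * x ≠ 0) :
    x / (1 + c * x) / (1 + d * (x / (1 + c * x))) = x / (1 + (c + d) * x) := by
  have hden : 1 + d * (x / (1 + c * x)) = (1 + (c + d) * x) / (1 + c * x) := by
    rw [eq_div_iff h, add_mul, mul_assoc, div_mul_cancel₀ _ h]
    ring
  rw [hden, div_div_div_cancel_right₀ h]

variable [LinearOrder K] [IsStrictOrderedRing K]

theorem div_one_add_mul_le_div_one_add_mul {c x y : K} (hc : 0 ≤ c) (hx : 0 ≤ x) (hxy : x ≤ y) :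
    x / (1 + c * x) ≤ y / (1 + c * y) := by
  have hy : 0 ≤ y := hx.trans hxy
  rw [div_le_div_iff₀ (by positivity) (by positivity)]
  linarith

theorem sub_mul_sq_le_div_one_add_mul {c x : K} (hc : 0 ≤ c) (hx : 0 ≤ x) :
    x - c * x ^ 2 ≤ x / (1 + c * x) := by
  rw [le_div_iff₀ (by positivity)]
  calc (x - c * x ^ 2) * (1 + c * x) = x - c ^ 2 * x ^ 3 := by ring
    _ ≤ x := sub_le_self _ (by positivity)

theorem sub_mul_sq_add_sub_le {κ B s x : K} (hκ : 0 ≤ κ) (hs : 0 ≤ s) (hB : B ≤ κ * s ^ 2)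
    (hx : s ≤ x) : x - κ * x ^ 2 + B - s ≤ (x - s) - κ * (x - s) ^ 2 := by
  have hcross : 0 ≤ κ * s * (x - s) := mul_nonneg (mul_nonneg hκ hs) (sub_nonneg.2 hx)
  calc x - κ * x ^ 2 + B - s
      = (x - s) - κ * (x - s) ^ 2 - 2 * (κ * s * (x - s)) + (B - κ * s ^ 2) := by ring
    _ ≤ (x - s) - κ * (x - s) ^ 2 := by linarith

theorem sub_mul_sq_add_le_add_max {κ B s x q : K} (hκ : 0 ≤ κ) (hs : 0 ≤ s) (hB : B ≤ κ * s ^ 2)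
    (hx : x ≤ s + max B q) : x - κ * x ^ 2 + B ≤ s + max B (q / (1 + κ * q)) := by
  rw [← sub_le_iff_le_add', le_max_iff]
  rcases le_or_gt x s with hxs | hsx
  · left
    have hsq : 0 ≤ κ * x ^ 2 := by positivity
    linarith
  · have hu : 0 ≤ x - s := sub_nonneg.2 hsx.le
    have hstep := sub_mul_sq_add_sub_le hκ hs hB hsx.le
    rw [← sub_le_iff_le_add', le_max_iff] at hx
    rcases hx with huB | huq
    · left
      have hsq : 0 ≤ κ * (x - s) ^ 2 := by positivity
      linarith
    · right
      calc x - κ * x ^ 2 + B - s ≤ (x - s) - κ * (x - s) ^ 2 := hstep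
        _ ≤ (x - s) / (1 + κ * (x - s)) := sub_mul_sq_le_div_one_add_mul hκ hu
        _ ≤ q / (1 + κ * q) := div_one_add_mul_le_div_one_add_mul hκ hu huq

theorem stmt0_general {w : ℕ → K} {κ B s : K} (hκ : 0 ≤ κ) (hs : 0 ≤ s) (hB : B ≤ κ * s ^ 2)
    (hw₀ : 0 ≤ w 0) (hrec : ∀ r, w (r + 1) ≤ w r - κ * w r ^ 2 + B) (r : ℕ) :
    w r ≤ s + max B (w 0 / (1 + κ * r * w 0)) := by
  induction r with
  | zero =>
    have hmax : w 0 ≤ max B (w 0 / (1 + κ * (0 : ℕ) * w 0)) := by simp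
    exact hmax.trans (le_add_of_nonneg_left hs)
  | succ r ih =>
    have hden : 1 + κ * r * w 0 ≠ 0 := by positivity
    have hflow := div_one_add_mul_comp κ hden
    rw [← mul_add_one, ← Nat.cast_succ] at hflow
    rw [← hflow]
    exact (hrec r).trans (sub_mul_sq_add_le_add_max hκ hs hB ih)

end QuadraticDecay

/-- Let `(w r)` be a sequence of nonnegative reals and `κ > 0`, `B > 0`.
If `w (r+1) ≤ w r - κ * (w r)^2 + B` for all `r`, then for every `r`,
`w r ≤ √(B/κ) + B + w 0 / (1 + κ * r * w 0)`. -/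
theorem stmt0 (w : ℕ → ℝ) (κ B : ℝ) (hκ : 0 < κ) (hB : 0 < B)
    (hw : ∀ r : ℕ, 0 ≤ w r)
    (hrec : ∀ r : ℕ, w (r + 1) ≤ w r - κ * (w r) ^ 2 + B) :
    ∀ r : ℕ, w r ≤ Real.sqrt (B / κ) + B + w 0 / (1 + κ * (r : ℝ) * w 0) := by
  intro r
  have hw₀ := hw 0
  have hs : κ * √(B / κ) ^ 2 = B := by
    rw [Real.sq_sqrt (by positivity), mul_div_cancel₀ _ hκ.ne']
  have hq : 0 ≤ w 0 / (1 + κ * r * w 0) := by positivity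
  have hbound := stmt0_general hκ.le (Real.sqrt_nonneg _) hs.ge hw₀ hrec r
  linarith [max_le_add_of_nonneg hB.le hq]
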